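/- On an open subset of ℝ³ with coordinates (x, y, z), let α > 0 be a smooth function of (x,y,z), let f > 0 be a smooth function of (x,y) only, let h > 0 be a smooth function of (y,z) only, and let β be a smooth function of (x,y,z) with ∂_x∂_z β = 0. Define the metric g = α²dy² + f²(dx + β_{,x}dy)² + h²(dz − β_{,z}dy)², i.e. g_{xx} = f², g_{xy} = f²β_{,x}, g_{zz} = h², g_{yz} = −h²β_{,z}, g_{yy} = α² + f²β_{,x}² + h²β_{,z}², g_{xz} = 0. Define the symmetric tensor field T by T^{xz} = T^{zx} = 1/(2αfh) and all other components zero. Then T is trace-free, g_{ij}T^{ij} = 0, and T satisfies the momentum constraint ∇_j T^{ij} = 0. -/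

import Mathlib

open Matrix

noncomputable section

abbrev V3 := Fin 3 → ℝ

/-- Partial derivative `∂ᵢ f` on `ℝ³`. -/
def pd (i : Fin 3) (f : V3 → ℝ) (x : V3) : ℝ := fderiv ℝ f x (Pi.single i 1)

/-- Christoffel symbols `Γ^i_{jk} = (1/2) g^{il}(∂_j g_{lk} + ∂_k g_{jl} - ∂_l g_{jk})`. -/
def christoffel (g : V3 → Matrix (Fin 3) (Fin 3) ℝ) (i j k : Fin 3) (x : V3) : ℝ :=
  (1 / 2) * ∑ l, (g x)⁻¹ i l *
    (pd j (fun y => g y l k) x + pd k (fun y => g y j l) x - pd l (fun y => g y j k) x)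

/-- `|g| = (det g)^{1/2}`. -/
def sqrtDet (g : V3 → Matrix (Fin 3) (Fin 3) ℝ) (x : V3) : ℝ := Real.sqrt (g x).det

/-- Covariant divergence of a contravariant symmetric 2-tensor:
`∇_j T^{ij} = |g|⁻¹ ∂_j(|g| T^{ij}) + Γ^i_{jk} T^{jk}`. -/
def covDivUp (g T : V3 → Matrix (Fin 3) (Fin 3) ℝ) (i : Fin 3) (x : V3) : ℝ :=
  (sqrtDet g x)⁻¹ * (∑ j, pd j (fun y => sqrtDet g y * T y i j) x) +
    ∑ j, ∑ k, christoffel g i j k x * T x j k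

/-- Covariant divergence in mixed form, for a contravariant tensor `T^{ij}`:
`∇_j T_i^{ j} = |g|⁻¹ ∂_j(|g| g_{ik} T^{kj}) - (1/2) T^{jk} ∂_i g_{jk}`. -/
def covDivLow (g T : V3 → Matrix (Fin 3) (Fin 3) ℝ) (i : Fin 3) (x : V3) : ℝ :=
  (sqrtDet g x)⁻¹ * (∑ j, pd j (fun y => sqrtDet g y * (∑ k, g y i k * T y k j)) x) -
    (1 / 2) * ∑ j, ∑ k, T x j k * pd i (fun y => g y j k) x

/-!
Since `det g = (α f h)²`, the weighted tensor `|g| T` has constant components, so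
`∇_j T^{ij} = Γ^i_{jk} T^{jk} = 2 Γ^i_{xz} T^{xz}`. Because `g_{xz} = 0`, the symbol `Γ^i_{xz}`
only involves `∂_z g_{xx}`, `∂_z g_{xy}`, `∂_x g_{zy}` and `∂_x g_{zz}`, all of which vanish when
`f`, `β_{,x}` do not depend on `z` and `h`, `β_{,z}` do not depend on `x`.
-/

open scoped Topology

section PartialDerivatives

variable {i j : Fin 3} {u v : V3 → ℝ} {x : V3}

theorem pd_eq_zero_of_eventuallyEq_const {c : ℝ} (h : u =ᶠ[𝓝 x] fun _ => c) : pd i u x = 0 := by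
  simp [pd, h.fderiv_eq]

theorem pd_eq_zero_of_update (hd : DifferentiableAt ℝ u x)
    (hu : ∀ t, u (Function.update x i t) = u x) : pd i u x = 0 := by
  have hline (t : ℝ) : x + t • Pi.single i 1 = Function.update x i (x i + t) := by
    ext k
    rcases eq_or_ne k i with rfl | hk <;> simp [*]
  simp [pd, ← hd.lineDeriv_eq_fderiv, lineDeriv, hline, hu]

theorem pd_neg : pd i (fun y => -u y) x = -pd i u x := by
  simp [pd, fderiv_fun_neg]

theorem pd_mul (hu : DifferentiableAt ℝ u x) (hv : DifferentiableAt ℝ v x) :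
    pd i (fun y => u y * v y) x = u x * pd i v x + v x * pd i u x := by
  simp [pd, fderiv_fun_mul hu hv]

theorem pd_pow (hu : DifferentiableAt ℝ u x) (n : ℕ) :
    pd i (fun y => u y ^ n) x = n * u x ^ (n - 1) * pd i u x := by
  simp [pd, fderiv_fun_pow n hu]

theorem differentiableAt_fderiv (hu : ContDiffAt ℝ 2 u x) : DifferentiableAt ℝ (fderiv ℝ u) x :=
  (hu.fderiv_right (m := 1) (by norm_num)).differentiableAt one_ne_zero

theorem differentiableAt_pd (hu : ContDiffAt ℝ 2 u x) : DifferentiableAt ℝ (pd i u) x :=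
  (differentiableAt_fderiv hu).clm_apply (differentiableAt_const _)

theorem pd_pd_eq_fderiv_fderiv (hu : ContDiffAt ℝ 2 u x) :
    pd i (pd j u) x = fderiv ℝ (fderiv ℝ u) x (Pi.single i 1) (Pi.single j 1) := by
  unfold pd
  simp [fderiv_clm_apply (differentiableAt_fderiv hu) (differentiableAt_const _)]

theorem pd_pd_comm (hu : ContDiffAt ℝ 2 u x) : pd i (pd j u) x = pd j (pd i u) x := by
  rw [pd_pd_eq_fderiv_fderiv hu, pd_pd_eq_fderiv_fderiv hu]
  exact hu.isSymmSndFDerivAt (by simp) _ _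

end PartialDerivatives

section Divergence

variable {g T : V3 → Matrix (Fin 3) (Fin 3) ℝ} {i j k : Fin 3} {x : V3}

theorem christoffel_comm (hg : ∀ y, (g y).IsSymm) :
    christoffel g i j k x = christoffel g i k j x := by
  have hswap (a b : Fin 3) : (fun y => g y a b) = fun y => g y b a :=
    funext fun y => (hg y).apply b a
  unfold christoffel
  congr 1
  refine Finset.sum_congr rfl fun l _ => ?_
  rw [hswap l k, hswap j l, hswap j k, add_comm (pd j _ x)]

theorem covDivUp_eq_sum_christoffel {C : Matrix (Fin 3) (Fin 3) ℝ}
    (hT : ∀ᶠ y in 𝓝 x, sqrtDet g y • T y = C) :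
    covDivUp g T i x = ∑ j, ∑ k, christoffel g i j k x * T x j k := by
  have hpd (j : Fin 3) : pd j (fun y => sqrtDet g y * T y i j) x = 0 :=
    pd_eq_zero_of_eventuallyEq_const <| hT.mono fun y hy => congr_fun₂ hy i j
  simp [covDivUp, hpd]

end Divergence

section XZTensor

/-- The symmetric tensor with components `T^{xz} = T^{zx} = t` and all others zero, i.e.
`2 t δ^{(i}_x δ^{j)}_z`. -/
def xzTensor (t : ℝ) : Matrix (Fin 3) (Fin 3) ℝ :=
  !![0, 0, t;
     0, 0, 0;
     t, 0, 0]

theorem sum_mul_xzTensor (A : Fin 3 → Fin 3 → ℝ) (t : ℝ) :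
    ∑ i, ∑ j, A i j * xzTensor t i j = (A 0 2 + A 2 0) * t := by
  simp [xzTensor, Fin.sum_univ_three, add_mul]

theorem smul_xzTensor (c t : ℝ) : c • xzTensor t = xzTensor (c * t) := by
  simp [xzTensor]

theorem covDivUp_xzTensor {g : V3 → Matrix (Fin 3) (Fin 3) ℝ} {τ : V3 → ℝ} {i : Fin 3} {x : V3}
    {c : ℝ} (hg : ∀ y, (g y).IsSymm) (hτ : ∀ᶠ y in 𝓝 x, sqrtDet g y * τ y = c) :
    covDivUp g (fun y => xzTensor (τ y)) i x = 2 * christoffel g i 0 2 x * τ x := by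
  have hdensity : ∀ᶠ y in 𝓝 x, sqrtDet g y • xzTensor (τ y) = xzTensor c :=
    hτ.mono fun y hy => by rw [smul_xzTensor, hy]
  rw [covDivUp_eq_sum_christoffel hdensity, sum_mul_xzTensor, christoffel_comm hg (j := 2), two_mul]

end XZTensor

section ShiftedMetric

/-- The metric `α²dy² + f²(dx + p dy)² + h²(dz - q dy)²` in coordinates `(x, y, z)`; the metric of
Corollary 3.1 is the case `p = β_{,x}`, `q = β_{,z}`. -/
def shiftedMetric (α f h p q : V3 → ℝ) (x : V3) : Matrix (Fin 3) (Fin 3) ℝ :=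
  !![f x ^ 2, f x ^ 2 * p x, 0;
     f x ^ 2 * p x, α x ^ 2 + f x ^ 2 * p x ^ 2 + h x ^ 2 * q x ^ 2, -(h x ^ 2 * q x);
     0, -(h x ^ 2 * q x), h x ^ 2]

variable {α f h p q : V3 → ℝ} {x : V3}

theorem isSymm_shiftedMetric : (shiftedMetric α f h p q x).IsSymm := by
  ext i j
  fin_cases i <;> fin_cases j <;> rfl

theorem det_shiftedMetric : (shiftedMetric α f h p q x).det = (α x * f x * h x) ^ 2 := by
  rw [shiftedMetric, det_fin_three]
  simp only [of_apply, cons_val]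
  ring

theorem sqrtDet_shiftedMetric (hpos : 0 ≤ α x * f x * h x) :
    sqrtDet (shiftedMetric α f h p q) x = α x * f x * h x := by
  rw [sqrtDet, det_shiftedMetric, Real.sqrt_sq hpos]

theorem sqrtDet_shiftedMetric_mul_inv (hα : 0 < α x) (hf : 0 < f x) (hh : 0 < h x) :
    sqrtDet (shiftedMetric α f h p q) x * (2 * α x * f x * h x)⁻¹ = 1 / 2 := by
  rw [sqrtDet_shiftedMetric (by positivity)]
  field_simp

theorem christoffel_shiftedMetric_zero_two (i : Fin 3)
    (hf : DifferentiableAt ℝ f x) (hh : DifferentiableAt ℝ h x)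
    (hp : DifferentiableAt ℝ p x) (hq : DifferentiableAt ℝ q x)
    (hf_z : pd 2 f x = 0) (hh_x : pd 0 h x = 0) (hp_z : pd 2 p x = 0) (hq_x : pd 0 q x = 0) :
    christoffel (shiftedMetric α f h p q) i 0 2 x = 0 := by
  have hxx : pd 2 (fun y => f y ^ 2) x = 0 := by rw [pd_pow hf, hf_z, mul_zero]
  have hzz : pd 0 (fun y => h y ^ 2) x = 0 := by rw [pd_pow hh, hh_x, mul_zero]
  have hxy : pd 2 (fun y => f y ^ 2 * p y) x = 0 := by
    rw [pd_mul (hf.fun_pow 2) hp, hxx, hp_z, mul_zero, mul_zero, add_zero]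
  have hyz : pd 0 (fun y => -(h y ^ 2 * q y)) x = 0 := by
    rw [pd_neg, pd_mul (hh.fun_pow 2) hq, hzz, hq_x, mul_zero, mul_zero, add_zero, neg_zero]
  have hconst (l : Fin 3) : pd l (fun _ => 0) x = 0 :=
    pd_eq_zero_of_eventuallyEq_const .rfl
  simp [christoffel, shiftedMetric, Fin.sum_univ_three, hxx, hxy, hyz, hzz, hconst]

end ShiftedMetric

theorem momentum_constraint_corollary31_general {U : Set V3} (hU : IsOpen U) {α f h p q : V3 → ℝ}
    (hα_pos : ∀ x ∈ U, 0 < α x) (hf_pos : ∀ x ∈ U, 0 < f x) (hh_pos : ∀ x ∈ U, 0 < h x)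
    (hf : ∀ x ∈ U, DifferentiableAt ℝ f x) (hh : ∀ x ∈ U, DifferentiableAt ℝ h x)
    (hp : ∀ x ∈ U, DifferentiableAt ℝ p x) (hq : ∀ x ∈ U, DifferentiableAt ℝ q x)
    (hf_z : ∀ x ∈ U, pd 2 f x = 0) (hh_x : ∀ x ∈ U, pd 0 h x = 0)
    (hp_z : ∀ x ∈ U, pd 2 p x = 0) (hq_x : ∀ x ∈ U, pd 0 q x = 0) :
    let g := shiftedMetric α f h p q
    let T := fun x => xzTensor (2 * α x * f x * h x)⁻¹
    (∀ x ∈ U, ∑ i, ∑ j, g x i j * T x i j = 0) ∧ ∀ i, ∀ x ∈ U, covDivUp g T i x = 0 := by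
  intro g T
  refine ⟨fun x _ => ?trace, fun i x hx => ?divergence⟩
  case trace =>
    exact (sum_mul_xzTensor (g x) _).trans (by simp [g, shiftedMetric])
  case divergence =>
    have hdensity : ∀ᶠ y in 𝓝 x, sqrtDet g y * (2 * α y * f y * h y)⁻¹ = 1 / 2 := by
      filter_upwards [hU.mem_nhds hx] with y hy
      exact sqrtDet_shiftedMetric_mul_inv (hα_pos y hy) (hf_pos y hy) (hh_pos y hy)
    have hΓ : christoffel g i 0 2 x = 0 :=
      christoffel_shiftedMetric_zero_two i (hf x hx) (hh x hx) (hp x hx) (hq x hx)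
        (hf_z x hx) (hh_x x hx) (hp_z x hx) (hq_x x hx)
    rw [covDivUp_xzTensor (fun _ => isSymm_shiftedMetric) hdensity, hΓ, mul_zero, zero_mul]

/-- **Corollary 3.1, equations (23c)–(25)**: for the metric
`g = α²dy² + f²(dx + β_{,x}dy)² + h²(dz - β_{,z}dy)²` (coordinates `(x,y,z) = (x¹,x²,x³)`)
with `f = f(x,y)`, `h = h(y,z)`, `β_{,xz} = 0`, the trace-free tensor
`T^{ij} = (αfh)⁻¹ δ^{(i}_x δ^{j)}_z` satisfies the momentum constraint `∇_j T^{ij} = 0`. -/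
theorem momentum_constraint_corollary31
    (U : Set V3) (hU : IsOpen U)
    (α f h β : V3 → ℝ)
    (hα_smooth : ContDiffOn ℝ (⊤ : ℕ∞) α U) (hα_pos : ∀ x ∈ U, 0 < α x)
    (hf_smooth : ContDiffOn ℝ (⊤ : ℕ∞) f U) (hf_pos : ∀ x ∈ U, 0 < f x)
    (hf_ind : ∀ x t, f (Function.update x 2 t) = f x)
    (hh_smooth : ContDiffOn ℝ (⊤ : ℕ∞) h U) (hh_pos : ∀ x ∈ U, 0 < h x)
    (hh_ind : ∀ x t, h (Function.update x 0 t) = h x)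
    (hβ_smooth : ContDiffOn ℝ (⊤ : ℕ∞) β U)
    (hβ_xz : ∀ x ∈ U, pd 0 (fun y => pd 2 β y) x = 0) :
    let g : V3 → Matrix (Fin 3) (Fin 3) ℝ := fun x =>
      !![f x ^ 2, f x ^ 2 * pd 0 β x, 0;
         f x ^ 2 * pd 0 β x,
           α x ^ 2 + f x ^ 2 * (pd 0 β x) ^ 2 + h x ^ 2 * (pd 2 β x) ^ 2,
           -(h x ^ 2 * pd 2 β x);
         0, -(h x ^ 2 * pd 2 β x), h x ^ 2]
    let T : V3 → Matrix (Fin 3) (Fin 3) ℝ := fun x =>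
      !![0, 0, (2 * α x * f x * h x)⁻¹;
         0, 0, 0;
         (2 * α x * f x * h x)⁻¹, 0, 0]
    (∀ x ∈ U, ∑ i, ∑ j, g x i j * T x i j = 0) ∧
    (∀ i, ∀ x ∈ U, covDivUp g T i x = 0) := by
  have hf x (hx : x ∈ U) := (hf_smooth.contDiffAt (hU.mem_nhds hx)).differentiableAt (by simp)
  have hh x (hx : x ∈ U) := (hh_smooth.contDiffAt (hU.mem_nhds hx)).differentiableAt (by simp)
  have hβ x (hx : x ∈ U) : ContDiffAt ℝ 2 β x :=
    (contDiffOn_infty.1 hβ_smooth 2).contDiffAt (hU.mem_nhds hx)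
  exact momentum_constraint_corollary31_general hU hα_pos hf_pos hh_pos hf hh
    (fun x hx => differentiableAt_pd (hβ x hx)) (fun x hx => differentiableAt_pd (hβ x hx))
    (fun x hx => pd_eq_zero_of_update (hf x hx) (hf_ind x))
    (fun x hx => pd_eq_zero_of_update (hh x hx) (hh_ind x))
    (fun x hx => (pd_pd_comm (hβ x hx)).trans (hβ_xz x hx)) hβ_xz
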